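/- (L⁴ estimate with the conjugate weight.) There exists a constant C > 0 such that for every finitely supported function a : ℤ×ℤ → ℂ, the trigonometric polynomial u(t,x) = Σ_{(q,k)} a(q,k) e^{i(qt+kx)} satisfies ( ∫_𝕋 ∫_𝕋 |u(t,x)|⁴ dx dt )^{1/4} ≤ C ( Σ_{(q,k)} (1+(q−k²)²)^{3/8} |a(q,k)|² )^{1/2}. -/

import Mathlib

noncomputable section

open Real Complex

/-- The trigonometric polynomial on `𝕋²` with coefficients `a : ℤ × ℤ → ℂ`,
`u(t,x) = Σ_{(q,k)} a(q,k) e^{i(qt+kx)}`. -/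
def trigPoly2 (a : ℤ × ℤ → ℂ) (t x : ℝ) : ℂ :=
  ∑' p : ℤ × ℤ, a p * Complex.exp (Complex.I * ((p.1 : ℂ) * (t : ℂ) + (p.2 : ℂ) * (x : ℂ)))

/-!
Expanding `u² = Σ_s c_s e_s` with `c_s = Σ_{p + p' = s} a(p) a(p')`, Parseval turns `∫∫ |u|⁴` into
`(2π)² Σ_s |c_s|²`, so everything reduces to an `ℓ²` bound on the self-convolution of the
nonnegative sequence `|a|` (`integral_pow_four`, `convSq_bound`).

Split the frequencies by the dyadic size `2^i` of the modulation `|q - k²|`. For fixed `s`, the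
pairs `p + p' = s` with levels `i ≤ j` number at most `O(2^i 2^(j/2))`: there are `O(2^i)` choices
of the smaller modulation, while `(2k - s.2)²` is confined to an interval of length `O(2^j)`, which
contains the squares of only `O(2^(j/2))` integers (`card_pairs_le`). Cauchy–Schwarz then bounds
the `(i, j)` block of the convolution in `ℓ²` by
`2^(i/2 + j/4) ‖a_i‖ ‖a_j‖ = 2^(-|i-j|/8) (2^(3i/8) ‖a_i‖) (2^(3j/8) ‖a_j‖)` up to a constant
(`bilinear_block`). The geometric off-diagonal decay allows the blocks to be summed by Minkowski's
inequality and Schur's test (`schur_geometric`). The dyadic decomposition matters: a single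
weighted Cauchy–Schwarz over all pairs at exponent `3/8` loses a logarithm.
-/

/-! ### Fourier side -/

lemma integral_exp_int (n : ℤ) :
    (∫ x in (0:ℝ)..(2 * π), Complex.exp (Complex.I * ((n : ℂ) * (x : ℂ))))
      = if n = 0 then ((2 * π : ℝ) : ℂ) else 0 := by
  split_ifs with h
  · subst h; simp
  · have hc : Complex.I * (n : ℂ) ≠ 0 := mul_ne_zero Complex.I_ne_zero (by exact_mod_cast h)
    have := integral_exp_mul_complex (a := 0) (b := 2 * π) hc
    simp only [mul_assoc] at this
    rw [this]
    have h1 : Complex.exp (Complex.I * ((n : ℂ) * ((2 * π : ℝ) : ℂ))) = 1 := by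
      rw [← Complex.exp_int_mul_two_pi_mul_I n]
      congr 1; push_cast; ring
    rw [h1]; simp

lemma parseval_one (A : Finset ℤ) (c : ℤ → ℂ) :
    (∫ x in (0:ℝ)..(2 * π), ‖∑ n ∈ A, c n * Complex.exp (Complex.I * ((n : ℂ) * (x : ℂ)))‖ ^ 2)
      = 2 * π * ∑ n ∈ A, ‖c n‖ ^ 2 := by
  have key : ∀ x : ℝ,
      ((‖∑ n ∈ A, c n * Complex.exp (Complex.I * ((n : ℂ) * (x : ℂ)))‖ ^ 2 : ℝ) : ℂ)
      = ∑ n ∈ A, ∑ m ∈ A, (c n * (starRingEnd ℂ) (c m)) *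
          Complex.exp (Complex.I * (((n - m : ℤ) : ℂ) * (x : ℂ))) := by
    intro x
    rw [Complex.ofReal_pow, ← Complex.mul_conj', map_sum, Finset.sum_mul_sum]
    refine Finset.sum_congr rfl fun n _ => Finset.sum_congr rfl fun m _ => ?_
    rw [map_mul, ← Complex.exp_conj]
    simp only [map_mul, Complex.conj_I, Complex.conj_ofReal, map_intCast]
    rw [mul_mul_mul_comm, ← Complex.exp_add]
    congr 2; push_cast; ring
  apply Complex.ofReal_injective
  rw [← intervalIntegral.integral_ofReal]
  simp_rw [key]
  have hint : ∀ (z : ℂ) (k : ℤ), IntervalIntegrable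
      (fun x : ℝ => z * Complex.exp (Complex.I * ((k : ℂ) * (x : ℂ)))) MeasureTheory.volume
      0 (2 * π) := by
    intro z k
    apply Continuous.intervalIntegrable
    fun_prop
  rw [intervalIntegral.integral_finsetSum]
  swap
  · intro n _
    apply Continuous.intervalIntegrable
    fun_prop
  push_cast
  rw [Finset.mul_sum]
  refine Finset.sum_congr rfl fun n hn => ?_
  rw [intervalIntegral.integral_finsetSum (fun m _ => by exact_mod_cast hint _ (n - m))]
  rw [Finset.sum_eq_single n]
  · have h0 := integral_exp_int (n - n)
    rw [intervalIntegral.integral_const_mul]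
    push_cast at h0
    rw [h0]
    simp [Complex.mul_conj']
    ring
  · intro m _ hm
    have h0 := integral_exp_int (n - m)
    rw [intervalIntegral.integral_const_mul]
    push_cast at h0
    rw [h0, if_neg (by omega)]
    simp
  · intro h; exact absurd hn h

lemma parseval_two (Q K : Finset ℤ) (c : ℤ × ℤ → ℂ) :
    (∫ t in (0:ℝ)..(2 * π), ∫ x in (0:ℝ)..(2 * π),
      ‖∑ s ∈ Q ×ˢ K, c s *
        Complex.exp (Complex.I * ((s.1 : ℂ) * (t : ℂ) + (s.2 : ℂ) * (x : ℂ)))‖ ^ 2)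
      = (2 * π) ^ 2 * ∑ s ∈ Q ×ˢ K, ‖c s‖ ^ 2 := by
  have h1 : ∀ t x : ℝ, ∑ s ∈ Q ×ˢ K, c s *
        Complex.exp (Complex.I * ((s.1 : ℂ) * (t : ℂ) + (s.2 : ℂ) * (x : ℂ)))
      = ∑ k ∈ K, (∑ q ∈ Q, c (q, k) * Complex.exp (Complex.I * ((q : ℂ) * (t : ℂ)))) *
          Complex.exp (Complex.I * ((k : ℂ) * (x : ℂ))) := by
    intro t x
    rw [Finset.sum_product_right]
    refine Finset.sum_congr rfl fun k _ => ?_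
    rw [Finset.sum_mul]
    refine Finset.sum_congr rfl fun q _ => ?_
    rw [mul_assoc, ← Complex.exp_add]
    congr 2; ring
  simp_rw [h1, parseval_one]
  rw [intervalIntegral.integral_const_mul, intervalIntegral.integral_finsetSum]
  · simp_rw [parseval_one]
    rw [Finset.sum_product_right, ← Finset.mul_sum]
    ring
  · intro k _
    apply Continuous.intervalIntegrable
    fun_prop

/-- The convolution square of `g` at `s`, the sum running over the pairs in `S × S`. When `S`
contains the support of the coefficients `g` of `u`, these are the Fourier coefficients of `u²`. -/
def convSq {R : Type*} [CommSemiring R] (S : Finset (ℤ × ℤ)) (g : ℤ × ℤ → R) (s : ℤ × ℤ) : R :=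
  ∑ x ∈ (S ×ˢ S).filter (fun x => x.1 + x.2 = s), g x.1 * g x.2

lemma integral_pow_four (S : Finset (ℤ × ℤ)) (a : ℤ × ℤ → ℂ) :
    ∃ T : Finset (ℤ × ℤ), (∫ t in (0:ℝ)..(2 * π), ∫ x in (0:ℝ)..(2 * π),
      ‖∑ p ∈ S, a p *
        Complex.exp (Complex.I * ((p.1 : ℂ) * (t : ℂ) + (p.2 : ℂ) * (x : ℂ)))‖ ^ 4)
      = (2 * π) ^ 2 * ∑ s ∈ T, ‖convSq S a s‖ ^ 2 := by
  set T0 := (S ×ˢ S).image (fun x => x.1 + x.2) with hT0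
  refine ⟨T0.image Prod.fst ×ˢ T0.image Prod.snd, ?_⟩
  rw [← parseval_two]
  congr 1; ext t; congr 1; ext x
  have h2 : (∑ p ∈ S, a p *
        Complex.exp (Complex.I * ((p.1 : ℂ) * (t : ℂ) + (p.2 : ℂ) * (x : ℂ)))) ^ 2
      = ∑ s ∈ T0.image Prod.fst ×ˢ T0.image Prod.snd, convSq S a s *
        Complex.exp (Complex.I * ((s.1 : ℂ) * (t : ℂ) + (s.2 : ℂ) * (x : ℂ))) := by
    rw [sq, Finset.sum_mul_sum, ← Finset.sum_product',
      ← Finset.sum_fiberwise_of_maps_to (s := S ×ˢ S)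
        (t := T0.image Prod.fst ×ˢ T0.image Prod.snd) (g := fun x => x.1 + x.2)]
    · refine Finset.sum_congr rfl fun s _ => ?_
      rw [convSq, Finset.sum_mul]
      refine Finset.sum_congr rfl fun y hy => ?_
      obtain ⟨_, rfl⟩ := Finset.mem_filter.1 hy
      rw [mul_mul_mul_comm, ← Complex.exp_add]
      congr 2
      simp only [Prod.fst_add, Prod.snd_add]
      push_cast; ring
    · intro y hy
      have : y.1 + y.2 ∈ T0 := Finset.mem_image_of_mem (fun x : (ℤ × ℤ) × (ℤ × ℤ) => x.1 + x.2) hy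
      exact Finset.mem_product.2 ⟨Finset.mem_image_of_mem _ this, Finset.mem_image_of_mem _ this⟩
  rw [← h2, norm_pow, ← pow_mul]

/-! ### Counting lattice points near the parabola -/

/-- `2 ^ (1/8)`: every fractional power of `2` in the argument is a natural power of it. -/
def rootTwo : ℝ := (2:ℝ) ^ ((1:ℝ) / 8)

lemma rootTwo_pow : rootTwo ^ 8 = 2 := by
  rw [rootTwo, ← Real.rpow_natCast, ← Real.rpow_mul (by norm_num)]
  norm_num

lemma one_lt_rootTwo : 1 < rootTwo := Real.one_lt_rpow (by norm_num) (by norm_num)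

lemma rootTwo_pos : 0 < rootTwo := one_pos.trans one_lt_rootTwo

/-- The dyadic modulation level of `(q, k)`: the number of binary digits of `|q - k²|`, so that
`|q - k²| < 2 ^ level`, and `2 ^ (level - 1) ≤ |q - k²|` unless `q = k²`. -/
def level (p : ℤ × ℤ) : ℕ := (p.1 - p.2 ^ 2).natAbs.size

lemma abs_lt_level (p : ℤ × ℤ) : |p.1 - p.2 ^ 2| < 2 ^ level p := by
  rw [Int.abs_eq_natAbs]
  exact_mod_cast Nat.lt_size_self _

lemma rootTwo_pow_level_le (p : ℤ × ℤ) :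
    rootTwo ^ (6 * level p) ≤
      2 * ((1:ℝ) + ((p.1 - p.2 ^ 2 : ℤ) : ℝ) ^ 2) ^ ((3:ℝ)/8) := by
  set m : ℤ := p.1 - p.2 ^ 2 with hm
  have h4 : rootTwo ^ (16 * level p) ≤ 4 * (1 + (m : ℝ) ^ 2) := by
    have e : rootTwo ^ (16 * level p) = (2 ^ level p : ℝ) ^ 2 := by
      rw [show 16 * level p = 8 * (level p * 2) by ring, pow_mul, rootTwo_pow, pow_mul]
    rw [e]
    rcases Nat.eq_zero_or_pos (level p) with h | h
    · rw [h]; nlinarith [sq_nonneg (m : ℝ)]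
    · obtain ⟨l, hl⟩ := Nat.exists_eq_succ_of_ne_zero h.ne'
      have h1 : 2 ^ l ≤ m.natAbs := Nat.lt_size.1 (by
        have : level p = m.natAbs.size := rfl
        omega)
      have h2 : (2:ℝ) ^ l ≤ |(m : ℝ)| := by
        have : ((2 ^ l : ℕ) : ℝ) ≤ (m.natAbs : ℝ) := by exact_mod_cast h1
        rw [Nat.cast_natAbs] at this
        push_cast at this
        exact this
      have h3 : ((2:ℝ) ^ l) ^ 2 ≤ (m : ℝ) ^ 2 := by
        rw [← sq_abs (m : ℝ)]; gcongr
      rw [hl, Nat.succ_eq_add_one, show ((2:ℝ) ^ (l + 1)) ^ 2 = 4 * ((2:ℝ) ^ l) ^ 2 by ring]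
      linarith
  have e : rootTwo ^ (6 * level p) = (rootTwo ^ (16 * level p)) ^ ((3:ℝ)/8) := by
    rw [← Real.rpow_natCast, ← Real.rpow_natCast, ← Real.rpow_mul rootTwo_pos.le]
    congr 1; push_cast; ring
  rw [e]
  calc (rootTwo ^ (16 * level p)) ^ ((3:ℝ)/8) ≤ (4 * (1 + (m : ℝ) ^ 2)) ^ ((3:ℝ)/8) :=
        Real.rpow_le_rpow (pow_nonneg rootTwo_pos.le _) h4 (by norm_num)
    _ = (4:ℝ) ^ ((3:ℝ)/8) * (1 + (m : ℝ) ^ 2) ^ ((3:ℝ)/8) :=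
        Real.mul_rpow (by norm_num) (by positivity)
    _ ≤ 2 * (1 + (m : ℝ) ^ 2) ^ ((3:ℝ)/8) := by
        gcongr
        calc (4:ℝ) ^ ((3:ℝ)/8) ≤ (4:ℝ) ^ ((1:ℝ)/2) :=
              Real.rpow_le_rpow_of_exponent_le (by norm_num) (by norm_num)
          _ = 2 := by
              rw [← Real.sqrt_eq_rpow, show (4:ℝ) = 2 ^ 2 by norm_num]
              exact Real.sqrt_sq (by norm_num)

/-- For nonnegative `z ≤ y` one has `(y - z)² ≤ y² - z²`, so integers with nearby squares are
confined to a short interval. -/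
lemma card_nonneg_le (Y : Finset ℤ) (E : ℕ) (h0 : ∀ y ∈ Y, 0 ≤ y)
    (hE : ∀ y ∈ Y, ∀ z ∈ Y, y ^ 2 - z ^ 2 ≤ (E : ℤ)) : Y.card ≤ Nat.sqrt E + 1 := by
  rcases Y.eq_empty_or_nonempty with rfl | hne
  · simp
  have hm := Y.min'_mem hne
  set z := Y.min' hne with hz
  have hsub : Y ⊆ Finset.Icc z (z + Nat.sqrt E) := by
    intro y hy
    have hzy : z ≤ y := Y.min'_le y hy
    rw [Finset.mem_Icc]
    refine ⟨hzy, ?_⟩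
    obtain ⟨d, hd⟩ := Int.eq_ofNat_of_zero_le (sub_nonneg.2 hzy)
    have h1 := hE y hy z hm
    have h2 := h0 z hm
    have h3 : (d : ℤ) * d ≤ E := by rw [← hd]; nlinarith
    have h4 : d ≤ Nat.sqrt E := Nat.le_sqrt.2 (by exact_mod_cast h3)
    have h5 : (d : ℤ) ≤ (Nat.sqrt E : ℤ) := by exact_mod_cast h4
    linarith
  calc Y.card ≤ _ := Finset.card_le_card hsub
    _ = Nat.sqrt E + 1 := by rw [Int.card_Icc]; omega

lemma card_sq_le (Y : Finset ℤ) (E : ℕ)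
    (hE : ∀ y ∈ Y, ∀ z ∈ Y, y ^ 2 - z ^ 2 ≤ (E : ℤ)) : Y.card ≤ 2 * (Nat.sqrt E + 1) := by
  have h1 := card_nonneg_le (Y.filter (fun y => 0 ≤ y)) E
    (fun y hy => (Finset.mem_filter.1 hy).2)
    (fun y hy z hz => hE y (Finset.mem_filter.1 hy).1 z (Finset.mem_filter.1 hz).1)
  have h2 := card_nonneg_le ((Y.filter (fun y => ¬ 0 ≤ y)).image (fun y => -y)) E
    (fun y hy => by
      obtain ⟨w, hw, rfl⟩ := Finset.mem_image.1 hy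
      have := (Finset.mem_filter.1 hw).2
      omega)
    (fun y hy z hz => by
      obtain ⟨w, hw, rfl⟩ := Finset.mem_image.1 hy
      obtain ⟨v, hv, rfl⟩ := Finset.mem_image.1 hz
      have := hE w (Finset.mem_filter.1 hw).1 v (Finset.mem_filter.1 hv).1
      simpa using this)
  rw [Finset.card_image_of_injective _ neg_injective] at h2
  have h3 := Finset.card_filter_add_card_filter_not (s := Y) (fun y => 0 ≤ y)
  omega

/-- A pair with sum `s` is determined by the modulation of its first member (fewer than `2 · 2^i`
values) and the integer `y = 2 k - s.2`, `k` being the frequency of that member. Since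
`y² = 2 s.1 - s.2² - 2 (m + m')`, where `m, m'` are the two modulations, `y²` lies in an interval
of length `O(2^j)`, which leaves `O(2^(j/2))` values of `y`. -/
lemma card_pairs_le (P : Finset ((ℤ × ℤ) × (ℤ × ℤ))) (s : ℤ × ℤ) (i j : ℕ) (hij : i ≤ j)
    (hs : ∀ x ∈ P, x.1 + x.2 = s) (hi : ∀ x ∈ P, level x.1 = i) (hj : ∀ x ∈ P, level x.2 = j) :
    (P.card : ℝ) ≤ 16 * rootTwo ^ (8 * i + 4 * j) := by
  set Y := P.image (fun x => 2 * x.1.2 - s.2) with hY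
  have hYc : Y.card ≤ 2 * (Nat.sqrt (8 * 2 ^ j) + 1) := by
    have hpow : (2:ℤ) ^ i ≤ 2 ^ j := pow_le_pow_right₀ (by norm_num) hij
    have key : ∀ y ∈ Y, |y ^ 2 - (2 * s.1 - s.2 ^ 2)| ≤ 4 * 2 ^ j := by
      intro y hy
      obtain ⟨x, hx, rfl⟩ := Finset.mem_image.1 hy
      have h1 := abs_lt_level x.1
      have h2 := abs_lt_level x.2
      rw [hi x hx] at h1
      rw [hj x hx] at h2
      rw [← hs x hx]
      simp only [Prod.fst_add, Prod.snd_add]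
      rw [abs_lt] at h1 h2
      rw [abs_le]
      constructor <;> linarith
    apply card_sq_le
    intro y hy z hz
    have h1 := abs_le.1 (key y hy)
    have h2 := abs_le.1 (key z hz)
    push_cast
    linarith
  have hcard : P.card ≤ (Finset.Ioo (-(2:ℤ) ^ i) (2 ^ i) ×ˢ Y).card := by
    apply Finset.card_le_card_of_injOn (fun x => (x.1.1 - x.1.2 ^ 2, 2 * x.1.2 - s.2))
    · intro x hx
      have hx' : x ∈ P := hx
      have h1 := abs_lt_level x.1
      rw [hi x hx', abs_lt] at h1
      exact Finset.mem_coe.2 (Finset.mem_product.2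
        ⟨Finset.mem_Ioo.2 h1, Finset.mem_image.2 ⟨x, hx', rfl⟩⟩)
    · intro x hx y hy hxy
      simp only [Prod.mk.injEq] at hxy
      have e2 : x.1.2 = y.1.2 := by linarith [hxy.2]
      have e1 : x.1.1 = y.1.1 := by
        have := hxy.1
        rw [e2] at this
        linarith
      have e : x.1 = y.1 := Prod.ext e1 e2
      refine Prod.ext e ?_
      have := (hs x hx).trans (hs y hy).symm
      rw [e] at this
      exact add_left_cancel this
  rw [Finset.card_product, Int.card_Ioo] at hcard
  have hI : ((2:ℤ) ^ i - -2 ^ i - 1).toNat ≤ 2 * 2 ^ i := by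
    rw [Int.toNat_le]; push_cast; linarith
  have hN : P.card ≤ (2 * 2 ^ i) * (2 * (Nat.sqrt (8 * 2 ^ j) + 1)) :=
    hcard.trans (Nat.mul_le_mul hI hYc)
  have hB : ((2:ℝ)) ^ j = (rootTwo ^ (4 * j)) ^ 2 := by
    rw [← pow_mul, show 4 * j * 2 = 8 * j by ring, pow_mul, rootTwo_pow]
  have hB1 : 1 ≤ rootTwo ^ (4 * j) := one_le_pow₀ one_lt_rootTwo.le
  have hsq : (Nat.sqrt (8 * 2 ^ j) : ℝ) ≤ 3 * rootTwo ^ (4 * j) := by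
    refine le_of_abs_le (abs_le_of_sq_le_sq ?_ ?_)
    · have : ((Nat.sqrt (8 * 2 ^ j) ^ 2 : ℕ) : ℝ) ≤ ((8 * 2 ^ j : ℕ) : ℝ) := by
        exact_mod_cast Nat.sqrt_le' _
      push_cast at this
      nlinarith
    · positivity
  have hNR : (P.card : ℝ) ≤ (2 * 2 ^ i) * (2 * (Nat.sqrt (8 * 2 ^ j) + 1)) := by
    exact_mod_cast hN
  calc (P.card : ℝ) ≤ (2 * 2 ^ i) * (2 * (Nat.sqrt (8 * 2 ^ j) + 1)) := hNR
    _ ≤ (2 * 2 ^ i) * (2 * (3 * rootTwo ^ (4 * j) + rootTwo ^ (4 * j))) := by gcongr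
    _ = 16 * rootTwo ^ (8 * i + 4 * j) := by
      rw [pow_add, pow_mul rootTwo 8 i, rootTwo_pow]; ring

/-- The square root of the number of pairs, symmetric in the two levels: as
`4 min + 2 max = 3 (i + j) - |i - j|`, it is the product of the weights `2^(3i/8)`, `2^(3j/8)` and
an off-diagonal gain `2^(-|i-j|/8)`. The exponent `|i - j|` is written `(i - j) + (j - i)` with
truncated subtraction. -/
lemma card_pairs_le' (P : Finset ((ℤ × ℤ) × (ℤ × ℤ))) (s : ℤ × ℤ) (i j : ℕ)
    (hs : ∀ x ∈ P, x.1 + x.2 = s) (hi : ∀ x ∈ P, level x.1 = i) (hj : ∀ x ∈ P, level x.2 = j) :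
    (P.card : ℝ) ≤
      (4 * rootTwo⁻¹ ^ ((i - j) + (j - i)) * rootTwo ^ (3 * i) * rootTwo ^ (3 * j)) ^ 2 := by
  have aux : ∀ m d : ℕ, (16:ℝ) * rootTwo ^ (8 * m + 4 * (m + d)) =
      (4 * rootTwo⁻¹ ^ d * rootTwo ^ (3 * m) * rootTwo ^ (3 * (m + d))) ^ 2 := by
    intro m d
    have hne : rootTwo ≠ 0 := rootTwo_pos.ne'
    have e : rootTwo⁻¹ ^ d * rootTwo ^ (3 * (m + d)) = rootTwo ^ (3 * m + 2 * d) := by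
      rw [show 3 * (m + d) = d + (3 * m + 2 * d) by ring, pow_add, ← mul_assoc, ← mul_pow,
        inv_mul_cancel₀ hne, one_pow, one_mul]
    rw [show 4 * rootTwo⁻¹ ^ d * rootTwo ^ (3 * m) * rootTwo ^ (3 * (m + d)) =
      4 * rootTwo ^ (3 * m) * (rootTwo⁻¹ ^ d * rootTwo ^ (3 * (m + d))) by ring, e]
    ring
  rcases le_total i j with h | h
  · obtain ⟨d, rfl⟩ := Nat.exists_eq_add_of_le h
    have := card_pairs_le P s i (i + d) h hs hi hj
    rw [aux] at this
    rwa [show i - (i + d) + (i + d - i) = d by omega]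
  · obtain ⟨d, rfl⟩ := Nat.exists_eq_add_of_le h
    have := card_pairs_le (P.map (Equiv.prodComm _ _).toEmbedding) s j (j + d) h
      (by
        intro x hx
        obtain ⟨y, hy, rfl⟩ := Finset.mem_map.1 hx
        rw [← hs y hy]; exact add_comm _ _)
      (by
        intro x hx
        obtain ⟨y, hy, rfl⟩ := Finset.mem_map.1 hx
        exact hj y hy)
      (by
        intro x hx
        obtain ⟨y, hy, rfl⟩ := Finset.mem_map.1 hx
        exact hi y hy)
    rw [aux, Finset.card_map] at this
    rw [show j + d - j + (j - (j + d)) = d by omega]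
    exact this.trans (le_of_eq (by ring))

/-! ### Bilinear estimate and summation over the dyadic levels -/

lemma bilinear_block (S T : Finset (ℤ × ℤ)) (f : ℤ × ℤ → ℝ) (i j : ℕ) :
    ∑ s ∈ T, (∑ x ∈ ((S ×ˢ S).filter (fun x => x.1 + x.2 = s)).filter
        (fun x => (level x.1, level x.2) = (i, j)), f x.1 * f x.2) ^ 2
      ≤ (4 * rootTwo⁻¹ ^ ((i - j) + (j - i))
          * (rootTwo ^ (3 * i) * √(∑ p ∈ S with level p = i, f p ^ 2))
          * (rootTwo ^ (3 * j) * √(∑ p ∈ S with level p = j, f p ^ 2))) ^ 2 := by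
  set N := (4 * rootTwo⁻¹ ^ ((i - j) + (j - i)) * rootTwo ^ (3 * i) * rootTwo ^ (3 * j)) ^ 2
    with hN
  have hN0 : 0 ≤ N := sq_nonneg _
  set U := (S.filter (fun p => level p = i)) ×ˢ (S.filter (fun p => level p = j)) with hU
  have hset : ∀ s, ((S ×ˢ S).filter (fun x => x.1 + x.2 = s)).filter
        (fun x => (level x.1, level x.2) = (i, j)) = U.filter (fun x => x.1 + x.2 = s) := by
    intro s
    ext x
    simp only [hU, Finset.mem_filter, Finset.mem_product, Prod.mk.injEq]
    tauto
  have hF : ∀ l, 0 ≤ ∑ p ∈ S with level p = l, f p ^ 2 :=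
    fun l => Finset.sum_nonneg fun p _ => sq_nonneg _
  calc _ ≤ ∑ s ∈ T, N * ∑ x ∈ U.filter (fun x => x.1 + x.2 = s), (f x.1 * f x.2) ^ 2 := by
        refine Finset.sum_le_sum fun s _ => ?_
        rw [hset]
        refine (sq_sum_le_card_mul_sum_sq).trans ?_
        refine mul_le_mul_of_nonneg_right ?_ (Finset.sum_nonneg fun x _ => sq_nonneg _)
        apply card_pairs_le' _ s i j
        · intro x hx; exact (Finset.mem_filter.1 hx).2
        · intro x hx
          exact (Finset.mem_filter.1 (Finset.mem_product.1 (Finset.mem_filter.1 hx).1).1).2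
        · intro x hx
          exact (Finset.mem_filter.1 (Finset.mem_product.1 (Finset.mem_filter.1 hx).1).2).2
    _ = N * ∑ s ∈ T, ∑ x ∈ U.filter (fun x => x.1 + x.2 = s), (f x.1 * f x.2) ^ 2 := by
        rw [Finset.mul_sum]
    _ ≤ N * ∑ x ∈ U, (f x.1 * f x.2) ^ 2 := by
        refine mul_le_mul_of_nonneg_left ?_ hN0
        exact Finset.sum_fiberwise_le_sum_of_sum_fiber_nonneg
          (fun s _ => Finset.sum_nonneg fun x _ => sq_nonneg _)
    _ = N * ((∑ p ∈ S with level p = i, f p ^ 2) * (∑ p ∈ S with level p = j, f p ^ 2)) := by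
        rw [hU, Finset.sum_product, Finset.sum_mul_sum]
        simp_rw [mul_pow]
    _ = _ := by
        rw [hN]
        conv_lhs => rw [← Real.sq_sqrt (hF i), ← Real.sq_sqrt (hF j)]
        ring

/-- Minkowski's inequality in `ℓ²(T)` for finitely many functions. -/
lemma minkowski_finset {ι κ : Type*} (T : Finset κ) (I : Finset ι) (B : ι → κ → ℝ) (n : ι → ℝ)
    (hn : ∀ k ∈ I, 0 ≤ n k) (hB : ∀ k ∈ I, ∑ s ∈ T, B k s ^ 2 ≤ n k ^ 2) :
    ∑ s ∈ T, (∑ k ∈ I, B k s) ^ 2 ≤ (∑ k ∈ I, n k) ^ 2 := by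
  have e : ∑ s ∈ T, (∑ k ∈ I, B k s) ^ 2 = ∑ k ∈ I, ∑ l ∈ I, ∑ s ∈ T, B k s * B l s := by
    simp_rw [sq, Finset.sum_mul_sum]
    rw [Finset.sum_comm]
    exact Finset.sum_congr rfl fun k _ => Finset.sum_comm
  rw [e, sq, Finset.sum_mul_sum]
  refine Finset.sum_le_sum fun k hk => Finset.sum_le_sum fun l hl => ?_
  refine le_of_abs_le (abs_le_of_sq_le_sq ?_ (mul_nonneg (hn k hk) (hn l hl)))
  refine (Finset.sum_mul_sq_le_sq_mul_sq T (B k) (B l)).trans ?_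
  rw [mul_pow]
  exact mul_le_mul (hB k hk) (hB l hl) (Finset.sum_nonneg fun s _ => sq_nonneg _) (sq_nonneg _)

lemma sum_pow_inj_le {r : ℝ} (h0 : 0 ≤ r) (h1 : r < 1) (A : Finset ℕ) (g : ℕ → ℕ)
    (hg : Set.InjOn g A) : ∑ j ∈ A, r ^ g j ≤ (1 - r)⁻¹ := by
  rw [← Finset.sum_image (f := fun n => r ^ n) hg, ← tsum_geometric_of_lt_one h0 h1]
  exact (summable_geometric_of_lt_one h0 h1).sum_le_tsum _ (fun n _ => pow_nonneg h0 n)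

lemma sum_pow_dist_le {r : ℝ} (h0 : 0 ≤ r) (h1 : r < 1) (n i : ℕ) :
    ∑ j ∈ Finset.range n, r ^ ((i - j) + (j - i)) ≤ 2 * (1 - r)⁻¹ := by
  rw [← Finset.sum_filter_add_sum_filter_not _ (fun j => j ≤ i), two_mul]
  refine add_le_add (sum_pow_inj_le h0 h1 _ _ ?_) (sum_pow_inj_le h0 h1 _ _ ?_)
  · intro x hx y hy hxy
    simp only [Finset.coe_filter, Set.mem_ofPred_eq] at hx hy
    simp only at hxy
    omega
  · intro x hx y hy hxy
    simp only [Finset.coe_filter, Set.mem_ofPred_eq] at hx hy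
    simp only at hxy
    omega

/-- Schur's test for the kernel `r ^ |i - j|`. -/
lemma schur_geometric {r : ℝ} (h0 : 0 ≤ r) (h1 : r < 1) (n : ℕ) (G : ℕ → ℝ) :
    ∑ k ∈ Finset.range n ×ˢ Finset.range n,
        r ^ ((k.1 - k.2) + (k.2 - k.1)) * G k.1 * G k.2
      ≤ 2 * (1 - r)⁻¹ * ∑ i ∈ Finset.range n, G i ^ 2 := by
  have hA : ∑ i ∈ Finset.range n, ∑ j ∈ Finset.range n, r ^ ((i - j) + (j - i)) * G i ^ 2
      ≤ 2 * (1 - r)⁻¹ * ∑ i ∈ Finset.range n, G i ^ 2 := by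
    rw [Finset.mul_sum]
    refine Finset.sum_le_sum fun i _ => ?_
    rw [← Finset.sum_mul]
    exact mul_le_mul_of_nonneg_right (sum_pow_dist_le h0 h1 n i) (sq_nonneg _)
  have hB : ∑ i ∈ Finset.range n, ∑ j ∈ Finset.range n, r ^ ((i - j) + (j - i)) * G j ^ 2
      ≤ 2 * (1 - r)⁻¹ * ∑ i ∈ Finset.range n, G i ^ 2 := by
    rw [Finset.sum_comm]
    simpa only [add_comm] using hA
  rw [Finset.sum_product]
  have hle : ∑ i ∈ Finset.range n, ∑ j ∈ Finset.range n, r ^ ((i - j) + (j - i)) * G i * G j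
      ≤ ∑ i ∈ Finset.range n, ∑ j ∈ Finset.range n,
        (r ^ ((i - j) + (j - i)) * G i ^ 2 + r ^ ((i - j) + (j - i)) * G j ^ 2) / 2 := by
    refine Finset.sum_le_sum fun i _ => Finset.sum_le_sum fun j _ => ?_
    have hr : 0 ≤ r ^ ((i - j) + (j - i)) := pow_nonneg h0 _
    nlinarith [mul_nonneg hr (sq_nonneg (G i - G j))]
  simp_rw [← Finset.sum_div, Finset.sum_add_distrib] at hle
  linarith

/-- The coefficient form of the `L⁴` estimate. -/
lemma convSq_bound : ∃ K > (0:ℝ), ∀ (S T : Finset (ℤ × ℤ)) (f : ℤ × ℤ → ℝ),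
    ∑ s ∈ T, (convSq S f s) ^ 2 ≤
      (K * ∑ p ∈ S, ((1:ℝ) + ((p.1 - p.2 ^ 2 : ℤ) : ℝ) ^ 2) ^ ((3:ℝ)/8) * f p ^ 2) ^ 2 := by
  have hr0 : 0 ≤ rootTwo⁻¹ := inv_nonneg.2 rootTwo_pos.le
  have hr1 : rootTwo⁻¹ < 1 := inv_lt_one_of_one_lt₀ one_lt_rootTwo
  have hr2 : 0 < (1 - rootTwo⁻¹)⁻¹ := inv_pos.2 (sub_pos.2 hr1)
  refine ⟨4 * (2 * (1 - rootTwo⁻¹)⁻¹) * 2, by positivity, fun S T f => ?_⟩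
  obtain ⟨n, hn⟩ : ∃ n, ∀ p ∈ S, level p ∈ Finset.range n :=
    ⟨S.sup level + 1, fun p hp =>
      Finset.mem_range.2 (Nat.lt_succ_of_le (Finset.le_sup (f := level) hp))⟩
  set G : ℕ → ℝ := fun i => rootTwo ^ (3 * i) * √(∑ p ∈ S with level p = i, f p ^ 2) with hG
  have hG0 : ∀ i, 0 ≤ G i := fun i => mul_nonneg (pow_nonneg rootTwo_pos.le _) (Real.sqrt_nonneg _)
  set I := Finset.range n ×ˢ Finset.range n with hI
  have hdec : ∀ s, convSq S f s = ∑ k ∈ I,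
      ∑ x ∈ ((S ×ˢ S).filter (fun x => x.1 + x.2 = s)).filter
        (fun x => (level x.1, level x.2) = k), f x.1 * f x.2 := by
    intro s
    rw [convSq, Finset.sum_fiberwise_of_maps_to]
    intro x hx
    have hx' := Finset.mem_product.1 (Finset.mem_filter.1 hx).1
    exact Finset.mem_product.2 ⟨hn _ hx'.1, hn _ hx'.2⟩
  simp_rw [hdec]
  refine (minkowski_finset T I _
    (fun k => 4 * rootTwo⁻¹ ^ ((k.1 - k.2) + (k.2 - k.1)) * G k.1 * G k.2) ?_ ?_).trans ?_
  · intro k _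
    have := hG0 k.1
    have := hG0 k.2
    positivity
  · intro k _
    exact bilinear_block S T f k.1 k.2
  have hsumG : ∑ i ∈ Finset.range n, G i ^ 2
      ≤ 2 * ∑ p ∈ S, ((1:ℝ) + ((p.1 - p.2 ^ 2 : ℤ) : ℝ) ^ 2) ^ ((3:ℝ)/8) * f p ^ 2 := by
    have e : ∀ i, G i ^ 2 = ∑ p ∈ S with level p = i, rootTwo ^ (6 * level p) * f p ^ 2 := by
      intro i
      simp only [hG]
      rw [mul_pow, Real.sq_sqrt (Finset.sum_nonneg fun p _ => sq_nonneg _), Finset.mul_sum]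
      refine Finset.sum_congr rfl fun p hp => ?_
      rw [(Finset.mem_filter.1 hp).2]
      ring
    simp_rw [e]
    rw [Finset.sum_fiberwise_of_maps_to hn, Finset.mul_sum]
    refine Finset.sum_le_sum fun p _ => ?_
    rw [← mul_assoc]
    exact mul_le_mul_of_nonneg_right (rootTwo_pow_level_le p) (sq_nonneg _)
  apply pow_le_pow_left₀
  · refine Finset.sum_nonneg fun k _ => ?_
    have := hG0 k.1
    have := hG0 k.2
    positivity
  calc ∑ k ∈ I, 4 * rootTwo⁻¹ ^ ((k.1 - k.2) + (k.2 - k.1)) * G k.1 * G k.2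
      = 4 * ∑ k ∈ I, rootTwo⁻¹ ^ ((k.1 - k.2) + (k.2 - k.1)) * G k.1 * G k.2 := by
        rw [Finset.mul_sum]
        exact Finset.sum_congr rfl fun k _ => by ring
    _ ≤ 4 * (2 * (1 - rootTwo⁻¹)⁻¹ * ∑ i ∈ Finset.range n, G i ^ 2) := by
        gcongr
        exact schur_geometric hr0 hr1 n G
    _ ≤ 4 * (2 * (1 - rootTwo⁻¹)⁻¹ * (2 * ∑ p ∈ S,
          ((1:ℝ) + ((p.1 - p.2 ^ 2 : ℤ) : ℝ) ^ 2) ^ ((3:ℝ)/8) * f p ^ 2)) := by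
        gcongr
    _ = _ := by ring

/-- **Bourgain's `L⁴` estimate on `𝕋²`:** `‖u‖_{L⁴(𝕋²)} ≲ ‖u‖_{X̃^{3/8,0}}`, i.e.
`(∫∫ |u|⁴)^{1/4} ≤ C (Σ (1+(q−k²)²)^{3/8} |a(q,k)|²)^{1/2}` for all trigonometric
polynomials `u` on `𝕋²`. -/
theorem bourgain_L4_estimate_conjugate_weight :
    ∃ C > (0:ℝ), ∀ a : ℤ × ℤ → ℂ, (Function.support a).Finite →
      (∫ t in (0:ℝ)..(2 * π), ∫ x in (0:ℝ)..(2 * π), ‖trigPoly2 a t x‖ ^ 4) ^ ((1:ℝ)/4)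
        ≤ C * (∑' p : ℤ × ℤ,
            ((1:ℝ) + ((p.1 - p.2 ^ 2 : ℤ) : ℝ) ^ 2) ^ ((3:ℝ)/8) * ‖a p‖ ^ 2) ^ ((1:ℝ)/2) := by
  obtain ⟨K, hK, hb⟩ := convSq_bound
  refine ⟨(2 * π * K) ^ ((1:ℝ)/2), by positivity, fun a ha => ?_⟩
  set S := ha.toFinset with hS
  have hz : ∀ p ∉ S, a p = 0 := by
    intro p hp
    by_contra h
    exact hp (ha.mem_toFinset.2 h)
  have hu : ∀ t x : ℝ, trigPoly2 a t x = ∑ p ∈ S, a p *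
      Complex.exp (Complex.I * ((p.1 : ℂ) * (t : ℂ) + (p.2 : ℂ) * (x : ℂ))) := by
    intro t x
    rw [trigPoly2, tsum_eq_sum (s := S)]
    intro p hp
    rw [hz p hp, zero_mul]
  rw [tsum_eq_sum (s := S) (fun p hp => by rw [hz p hp]; simp)]
  simp_rw [hu]
  obtain ⟨T, hT⟩ := integral_pow_four S a
  rw [hT]
  set W := ∑ p ∈ S, ((1:ℝ) + ((p.1 - p.2 ^ 2 : ℤ) : ℝ) ^ 2) ^ ((3:ℝ)/8) * ‖a p‖ ^ 2 with hW
  have hW0 : 0 ≤ W := Finset.sum_nonneg fun p _ => by positivity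
  have h1 : ∑ s ∈ T, ‖convSq S a s‖ ^ 2 ≤ (K * W) ^ 2 := by
    refine le_trans (Finset.sum_le_sum fun s _ => ?_) (hb S T (fun p => ‖a p‖))
    refine pow_le_pow_left₀ (norm_nonneg _) ?_ 2
    refine (norm_sum_le _ _).trans (le_of_eq ?_)
    simp [convSq]
  calc ((2 * π) ^ 2 * ∑ s ∈ T, ‖convSq S a s‖ ^ 2) ^ ((1:ℝ)/4)
      ≤ ((2 * π * K * W) ^ 2) ^ ((1:ℝ)/4) := by
        apply Real.rpow_le_rpow
        · exact mul_nonneg (sq_nonneg _) (Finset.sum_nonneg fun s _ => sq_nonneg _)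
        · rw [show (2 * π * K * W) ^ 2 = (2 * π) ^ 2 * (K * W) ^ 2 by ring]
          gcongr
        · norm_num
    _ = (2 * π * K * W) ^ ((1:ℝ)/2) := by
        rw [← Real.rpow_natCast, ← Real.rpow_mul (by positivity)]
        norm_num
    _ = (2 * π * K) ^ ((1:ℝ)/2) * W ^ ((1:ℝ)/2) := Real.mul_rpow (by positivity) hW0
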